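/- Let {F_n} be the Fibonacci sequence with F_0 = F_1 = 1, set ξ1 = ∏_{n=1}^∞ (1 + 1/F_n) and ξ2 = ∏_{n=3}^∞ (1 - 1/F_n), and let β = (√5 - 1)/2. Then the real numbers θ3(β) and θ4(β) are algebraic over the field ℚ(ξ1, ξ2). -/

import Mathlib

/-!
Put `Q = β²` and
`A = ∏_{k≥0} (1 + Q^{2k+1})`, `B = ∏_{k≥1} (1 + Q^{2k})`,
`C = ∏_{k≥0} (1 - Q^{2k+1})`, `D = ∏_{k≥1} (1 - Q^{2k})`.

The classical factorizations of `f_m ± 1` (with `f_m` the usual Fibonacci numbers) into a Fibonacci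
number times a Lucas number, grouped over four consecutive indices (`fib_factors`), make the partial
products of `ξ1` and `ξ2` telescope (`xi1_partial`, `xi2_partial`). In the limit `ξ1` is `A B²` and
`ξ2` is `C² D² / A`, each up to a nonzero factor in `ℚ(β)`.

Two relations tie `A`, `B`, `C`, `D` together. Euler's `A B C = 1` follows from `euler_partial`.
Jacobi's `A⁸ = 16 Q B⁸ + C⁸` is the quartic theta identity at `Q`; it comes from the Jacobi triple
product (`triple_product`, the limit of its finite version `finite_triple_product`) together with
the quadratic identities `thetaSum_sq_add`, `thetaSum_sq_sub` and `thetaSum_mul_neg`, which relate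
theta series at `β` to theta series at `Q` through the substitutions `(m, n) = (a + b, a - b)` and
`(m, n) = (a + b + 1, a - b)`.

With these relations `A`, `B` and `C` are algebraic over `ℚ(ξ1)`, and then `D` is algebraic over
`ℚ(ξ1, ξ2)` (`prods_mem`). The quadratic identities express `θ3(β)²` and `θ4(β)²` as polynomials in
`A`, `B`, `D` and `β`, which finishes the proof.
-/

open scoped BigOperators

noncomputable section

/-- Fibonacci sequence with `F 0 = F 1 = 1`. -/
def F : ℕ → ℕ
  | 0 => 1
  | 1 => 1
  | n + 2 => F (n + 1) + F n

/-- The golden ratio conjugate `β = (√5 - 1)/2`. -/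
noncomputable def β : ℝ := (Real.sqrt 5 - 1) / 2

/-- Jacobi theta function `θ₂(q) = 2 q^{1/4} ∑_{n≥0} q^{n(n+1)}`. -/
noncomputable def θ2 (q : ℝ) : ℝ := 2 * q ^ ((1 : ℝ) / 4) * ∑' n : ℕ, q ^ (n * (n + 1))

/-- Jacobi theta function `θ₃(q) = 1 + 2 ∑_{n≥1} q^{n²}`. -/
noncomputable def θ3 (q : ℝ) : ℝ := 1 + 2 * ∑' n : ℕ, q ^ ((n + 1) ^ 2)

/-- Jacobi theta function `θ₄(q) = 1 + 2 ∑_{n≥1} (-1)^n q^{n²}`. -/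
noncomputable def θ4 (q : ℝ) : ℝ := 1 + 2 * ∑' n : ℕ, (-1 : ℝ) ^ (n + 1) * q ^ ((n + 1) ^ 2)

open Filter Topology

/-! ### Gaussian binomials and the Jacobi triple product -/

/-- The finite `q`-Pochhammer product `∏_{i=1}^n (1 - p^i)`. -/
def poch (p : ℝ) (n : ℕ) : ℝ := ∏ i ∈ Finset.range n, (1 - p ^ (i + 1))

/-- The Gaussian binomial coefficient with base `p`, defined by one of its two Pascal rules;
it vanishes when the lower index exceeds the upper one. -/
def gaussBinom (p : ℝ) : ℕ → ℕ → ℝ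
  | _, 0 => 1
  | 0, _ + 1 => 0
  | n + 1, j + 1 => gaussBinom p n j + p ^ (j + 1) * gaussBinom p n (j + 1)

theorem gaussBinom_zero_right (p : ℝ) (n : ℕ) : gaussBinom p n 0 = 1 := by
  cases n <;> rfl

theorem gaussBinom_succ_succ (p : ℝ) (n j : ℕ) :
    gaussBinom p (n + 1) (j + 1) = gaussBinom p n j + p ^ (j + 1) * gaussBinom p n (j + 1) := rfl

theorem gaussBinom_of_lt (p : ℝ) {n j : ℕ} (h : n < j) : gaussBinom p n j = 0 := by
  induction n generalizing j with
  | zero => cases j with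
    | zero => omega
    | succ j => rfl
  | succ n ih => cases j with
    | zero => omega
    | succ j => rw [gaussBinom_succ_succ, ih (by omega), ih (by omega)]; ring

theorem gaussBinom_self (p : ℝ) (n : ℕ) : gaussBinom p n n = 1 := by
  induction n with
  | zero => rfl
  | succ n ih => rw [gaussBinom_succ_succ, ih, gaussBinom_of_lt p (by omega)]; ring

theorem poch_succ (p : ℝ) (n : ℕ) : poch p (n + 1) = poch p n * (1 - p ^ (n + 1)) :=
  Finset.prod_range_succ _ _

theorem gaussBinom_mul_poch (p : ℝ) (n : ℕ) :
    ∀ i j : ℕ, i + j = n → gaussBinom p n i * poch p i * poch p j = poch p n := by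
  induction n with
  | zero =>
    intro i j h
    obtain ⟨rfl, rfl⟩ : i = 0 ∧ j = 0 := by omega
    simp [gaussBinom_zero_right, poch]
  | succ n ih =>
    intro i j h
    cases i with
    | zero =>
      obtain rfl : j = n + 1 := by omega
      simp [gaussBinom_zero_right, poch]
    | succ i =>
      cases j with
      | zero =>
        obtain rfl : i = n := by omega
        simp [gaussBinom_self, poch]
      | succ j =>
        obtain rfl : n = i + j + 1 := by omega
        have h1 := ih i (j + 1) (by omega)
        have h2 := ih (i + 1) j (by omega)
        rw [gaussBinom_succ_succ, poch_succ p (i + j + 1)]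
        calc _ = gaussBinom p (i + j + 1) i * poch p i * poch p (j + 1) * (1 - p ^ (i + 1))
              + p ^ (i + 1) * (gaussBinom p (i + j + 1) (i + 1) * poch p (i + 1) * poch p j)
                * (1 - p ^ (j + 1)) := by rw [poch_succ p i, poch_succ p j]; ring
          _ = _ := by rw [h1, h2]; ring

theorem poch_pos {p : ℝ} (h0 : 0 < p) (h1 : p < 1) (n : ℕ) : 0 < poch p n :=
  Finset.prod_pos fun i _ => by
    have := pow_lt_one₀ h0.le h1 (Nat.succ_ne_zero i)
    simpa using this

/-- The second Pascal rule. -/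
theorem gaussBinom_succ_succ' {p : ℝ} (h0 : 0 < p) (h1 : p < 1) {n j : ℕ} (h : j ≤ n) :
    gaussBinom p (n + 1) (j + 1) = gaussBinom p n (j + 1) + p ^ (n - j) * gaussBinom p n j := by
  rcases h.eq_or_lt with rfl | h
  · rw [gaussBinom_self, gaussBinom_self, gaussBinom_of_lt p (by omega)]; simp
  · obtain ⟨l, rfl⟩ : ∃ l, n = j + l + 1 := ⟨n - j - 1, by omega⟩
    have a1 := gaussBinom_mul_poch p (j + l + 2) (j + 1) (l + 1) (by omega)
    have a2 := gaussBinom_mul_poch p (j + l + 1) (j + 1) l (by omega)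
    have a3 := gaussBinom_mul_poch p (j + l + 1) j (l + 1) (by omega)
    have hne : poch p (j + 1) * poch p (l + 1) ≠ 0 :=
      mul_ne_zero (poch_pos h0 h1 _).ne' (poch_pos h0 h1 _).ne'
    apply mul_right_cancel₀ hne
    have e : j + l + 1 - j = l + 1 := by omega
    rw [e, ← mul_assoc, a1, poch_succ p (j + l + 1)]
    calc _ = poch p (j + l + 1) * (1 - p ^ (l + 1))
          + p ^ (l + 1) * poch p (j + l + 1) * (1 - p ^ (j + 1)) := by ring
      _ = _ := by
        conv_lhs => rw [show p ^ (l + 1) * poch p (j + l + 1) = p ^ (l + 1) *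
            (gaussBinom p (j + l + 1) j * poch p j * poch p (l + 1)) by rw [a3], ← a2]
        rw [poch_succ p j, poch_succ p l]; ring

/-- The general term `q^{n²} z^n` of the two-variable theta series. -/
def thetaTerm (q z : ℝ) (n : ℤ) : ℝ := q ^ (n ^ 2) * z ^ n

theorem thetaTerm_succ {q z : ℝ} (hq : q ≠ 0) (hz : z ≠ 0) (n : ℤ) :
    thetaTerm q z (n + 1) = q ^ (2 * n + 1) * z * thetaTerm q z n := by
  unfold thetaTerm
  rw [show (n + 1) ^ 2 = (2 * n + 1) + n ^ 2 by ring, zpow_add₀ hq, zpow_add_one₀ hz]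
  ring

/-- The finite Jacobi triple product identity (MacMahon's form of the `q`-binomial theorem). -/
theorem finite_triple_product {q z : ℝ} (h0 : 0 < q) (h1 : q < 1) (hz : z ≠ 0) (M N : ℕ) :
    (∏ k ∈ Finset.range M, (1 + z * q ^ (2 * k + 1))) *
      (∏ k ∈ Finset.range N, (1 + z⁻¹ * q ^ (2 * k + 1))) =
    ∑ j ∈ Finset.range (M + N + 1),
      gaussBinom (q ^ 2) (M + N) j * thetaTerm q z ((j : ℤ) - N) := by
  have hp0 : 0 < q ^ 2 := by positivity
  have hp1 : q ^ 2 < 1 := pow_lt_one₀ h0.le h1 two_ne_zero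
  induction M with
  | succ M ih =>
    rw [Finset.prod_range_succ, mul_right_comm, ih, show M + 1 + N = M + N + 1 by ring,
      Finset.sum_range_succ' _ (M + N + 1)]
    have step : ∀ j ∈ Finset.range (M + N + 1),
        gaussBinom (q ^ 2) (M + N + 1) (j + 1) * thetaTerm q z (((j + 1 : ℕ) : ℤ) - N) =
        gaussBinom (q ^ 2) (M + N) (j + 1) * thetaTerm q z (((j + 1 : ℕ) : ℤ) - N) +
        z * q ^ (2 * M + 1) * (gaussBinom (q ^ 2) (M + N) j * thetaTerm q z ((j : ℤ) - N)) := by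
      intro j hj
      have hj' : j ≤ M + N := by simpa [Nat.lt_succ_iff] using hj
      rw [gaussBinom_succ_succ' hp0 hp1 hj']
      have e : (q ^ 2) ^ (M + N - j) * thetaTerm q z (((j + 1 : ℕ) : ℤ) - N)
          = z * q ^ (2 * M + 1) * thetaTerm q z ((j : ℤ) - N) := by
        rw [show (((j + 1 : ℕ) : ℤ) - N) = ((j : ℤ) - N) + 1 by push_cast; ring,
          thetaTerm_succ h0.ne' hz, ← mul_assoc, ← mul_assoc]
        congr 1
        rw [mul_comm z]
        congr 1
        rw [← pow_mul, ← zpow_natCast, ← zpow_natCast, ← zpow_add₀ h0.ne']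
        congr 1
        push_cast [Nat.cast_sub hj']
        ring
      linear_combination gaussBinom (q ^ 2) (M + N) j * e
    rw [Finset.sum_congr rfl step, Finset.sum_add_distrib, ← Finset.mul_sum]
    have tail := Finset.sum_range_succ' (fun j : ℕ =>
      gaussBinom (q ^ 2) (M + N) j * thetaTerm q z ((j : ℤ) - N)) (M + N + 1)
    rw [Finset.sum_range_succ, gaussBinom_of_lt _ (show M + N < M + N + 1 by omega),
      zero_mul, add_zero] at tail
    rw [gaussBinom_zero_right] at tail ⊢
    linear_combination tail
  | zero =>
    induction N with
    | zero => simp [gaussBinom_zero_right, thetaTerm]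
    | succ N ih =>
      simp only [Finset.range_zero, Finset.prod_empty, one_mul, zero_add] at ih ⊢
      rw [Finset.prod_range_succ, ih, Finset.sum_range_succ' _ (N + 1)]
      have e : ∀ j : ℕ, (q ^ 2) ^ j * thetaTerm q z ((j : ℤ) - (N + 1 : ℕ))
          = z⁻¹ * q ^ (2 * N + 1) * thetaTerm q z ((j : ℤ) - N) := by
        intro j
        rw [show ((j : ℤ) - N) = ((j : ℤ) - (N + 1 : ℕ)) + 1 by push_cast; ring,
          thetaTerm_succ h0.ne' hz, ← mul_assoc]
        congr 1
        rw [show z⁻¹ * q ^ (2 * N + 1) * (q ^ (2 * ((j : ℤ) - (N + 1 : ℕ)) + 1) * z)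
          = (z⁻¹ * z) * (q ^ (2 * N + 1) * q ^ (2 * ((j : ℤ) - (N + 1 : ℕ)) + 1)) by ring,
          inv_mul_cancel₀ hz, one_mul, ← pow_mul, ← zpow_natCast, ← zpow_natCast,
          ← zpow_add₀ h0.ne']
        congr 1
        push_cast
        ring
      have step : ∀ j ∈ Finset.range (N + 1),
          gaussBinom (q ^ 2) (N + 1) (j + 1) * thetaTerm q z (((j + 1 : ℕ) : ℤ) - (N + 1 : ℕ)) =
          gaussBinom (q ^ 2) N j * thetaTerm q z ((j : ℤ) - N) + z⁻¹ * q ^ (2 * N + 1) *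
          (gaussBinom (q ^ 2) N (j + 1) * thetaTerm q z (((j + 1 : ℕ) : ℤ) - N)) := by
        intro j _
        rw [gaussBinom_succ_succ]
        have e' := e (j + 1)
        rw [show (((j + 1 : ℕ) : ℤ) - (N + 1 : ℕ)) = (j : ℤ) - N by push_cast; ring] at e' ⊢
        linear_combination gaussBinom (q ^ 2) N (j + 1) * e'
      rw [Finset.sum_congr rfl step, Finset.sum_add_distrib, ← Finset.mul_sum]
      have tail := Finset.sum_range_succ' (fun j : ℕ =>
        gaussBinom (q ^ 2) N j * thetaTerm q z ((j : ℤ) - N)) (N + 1)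
      rw [Finset.sum_range_succ, gaussBinom_of_lt _ (show N < N + 1 by omega),
        zero_mul, add_zero] at tail
      have e0 := e 0
      rw [gaussBinom_zero_right] at tail ⊢
      rw [pow_zero, one_mul] at e0
      rw [one_mul] at tail ⊢
      linear_combination z⁻¹ * q ^ (2 * N + 1) * tail - e0

theorem exists_prod_limit (f : ℕ → ℝ) (hs : Summable fun i => ‖f i‖) (hpos : ∀ i, 0 < 1 + f i) :
    ∃ L : ℝ, 0 < L ∧ Tendsto (fun n => ∏ i ∈ Finset.range n, (1 + f i)) atTop (𝓝 L) := by
  have ht := (multipliable_one_add_of_summable hs).hasProd.tendsto_prod_nat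
  refine ⟨_, lt_of_le_of_ne ?_ (tprod_one_add_ne_zero_of_summable (fun i => (hpos i).ne') hs).symm,
    ht⟩
  exact ge_of_tendsto' ht fun n => Finset.prod_nonneg fun i _ => (hpos i).le

theorem poch_antitone {p : ℝ} (h0 : 0 < p) (h1 : p < 1) : Antitone (poch p) :=
  antitone_nat_of_succ_le fun n => by
    rw [poch_succ]
    have : 0 ≤ p ^ (n + 1) := by positivity
    nlinarith [poch_pos h0 h1 n]

theorem gaussBinom_eq {p : ℝ} (h0 : 0 < p) (h1 : p < 1) (i j : ℕ) :
    gaussBinom p (i + j) i = poch p (i + j) / (poch p i * poch p j) := by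
  rw [eq_div_iff (mul_pos (poch_pos h0 h1 _) (poch_pos h0 h1 _)).ne', ← mul_assoc]
  exact gaussBinom_mul_poch p _ i j rfl

theorem gaussBinom_bound {p D : ℝ} (h0 : 0 < p) (h1 : p < 1) (hD : 0 < D)
    (hlim : Tendsto (poch p) atTop (𝓝 D)) (n i : ℕ) :
    |gaussBinom p n i| ≤ 1 / (D * D) := by
  rcases lt_or_ge n i with h | h
  · rw [gaussBinom_of_lt p h, abs_zero]; positivity
  · obtain ⟨j, rfl⟩ := Nat.exists_eq_add_of_le h
    have hle : ∀ n, D ≤ poch p n := (poch_antitone h0 h1).le_of_tendsto hlim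
    have h3 : poch p (i + j) ≤ 1 := by
      simpa [poch] using poch_antitone h0 h1 (Nat.zero_le (i + j))
    have hi := poch_pos h0 h1 i
    have hj := poch_pos h0 h1 j
    have hij := poch_pos h0 h1 (i + j)
    rw [gaussBinom_eq h0 h1, abs_of_pos (by positivity)]
    gcongr
    · exact hle i
    · exact hle j

theorem tendsto_toNat_add (n : ℤ) : Tendsto (fun N : ℕ => ((N : ℤ) + n).toNat) atTop atTop :=
  tendsto_atTop.2 fun b => by
    filter_upwards [eventually_ge_atTop (b + n.natAbs)] with N hN
    omega

/-- The Jacobi triple product identity, obtained from the finite one by dominated convergence: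
each Gaussian binomial coefficient `[2N, N + n]` tends to `1 / D` and is at most `1 / D²`. -/
theorem triple_product {q z D a b : ℝ} (h0 : 0 < q) (h1 : q < 1) (hz : z ≠ 0) (hD : 0 < D)
    (hlim : Tendsto (poch (q ^ 2)) atTop (𝓝 D))
    (ha : Tendsto (fun N => ∏ k ∈ Finset.range N, (1 + z * q ^ (2 * k + 1))) atTop (𝓝 a))
    (hb : Tendsto (fun N => ∏ k ∈ Finset.range N, (1 + z⁻¹ * q ^ (2 * k + 1))) atTop (𝓝 b))
    (hs : Summable fun n : ℤ => ‖thetaTerm q z n‖) :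
    ∑' n : ℤ, thetaTerm q z n = D * a * b := by
  have hp0 : 0 < q ^ 2 := by positivity
  have hp1 : q ^ 2 < 1 := pow_lt_one₀ h0.le h1 two_ne_zero
  let c : ℕ → ℤ → ℝ := fun N n =>
    if -(N : ℤ) ≤ n then gaussBinom (q ^ 2) (N + N) ((N : ℤ) + n).toNat else 0
  have hfin : ∀ N : ℕ, (∏ k ∈ Finset.range N, (1 + z * q ^ (2 * k + 1))) *
      (∏ k ∈ Finset.range N, (1 + z⁻¹ * q ^ (2 * k + 1))) =
      ∑' n : ℤ, c N n * thetaTerm q z n := by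
    intro N
    rw [finite_triple_product h0 h1 hz]
    have hinj : Function.Injective (fun j : ℕ => (j : ℤ) - N) := fun i j h => by
      simp only at h; omega
    rw [← hinj.tsum_eq (f := fun n : ℤ => c N n * thetaTerm q z n)]
    · rw [tsum_eq_sum (s := Finset.range (N + N + 1))]
      · refine Finset.sum_congr rfl fun j _ => ?_
        simp only [c]
        rw [if_pos (by omega), show ((N : ℤ) + ((j : ℤ) - N)).toNat = j by omega]
      · intro j hj
        simp only [Finset.mem_range, not_lt] at hj
        simp only [c]
        rw [if_pos (by omega), show ((N : ℤ) + ((j : ℤ) - N)).toNat = j by omega,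
          gaussBinom_of_lt _ (by omega), zero_mul]
    · intro n hn
      have hn' : -(N : ℤ) ≤ n := by
        by_contra hcon
        exact hn (by simp only [c]; rw [if_neg hcon, zero_mul])
      exact ⟨((N : ℤ) + n).toNat, by simp only; omega⟩
  have hc : ∀ n : ℤ, Tendsto (fun N => c N n) atTop (𝓝 (1 / D)) := by
    intro n
    have h2 : Tendsto (fun N : ℕ => poch (q ^ 2) (N + N)) atTop (𝓝 D) :=
      hlim.comp (tendsto_atTop_mono (fun N => Nat.le_add_left N N) tendsto_id)
    have h3 := hlim.comp (tendsto_toNat_add n)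
    have h4 := hlim.comp (tendsto_toNat_add (-n))
    have h5 := h2.div (h3.mul h4) (mul_pos hD hD).ne'
    rw [show D / (D * D) = 1 / D by field_simp] at h5
    refine h5.congr' ?_
    filter_upwards [eventually_ge_atTop n.natAbs] with N hN
    simp only [c]
    rw [if_pos (by omega)]
    have e := gaussBinom_eq hp0 hp1 ((N : ℤ) + n).toNat ((N : ℤ) + -n).toNat
    rw [show ((N : ℤ) + n).toNat + ((N : ℤ) + -n).toNat = N + N by omega] at e
    rw [e]
    rfl
  have hdom := tendsto_tsum_of_dominated_convergence (𝓕 := atTop)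
    (f := fun N n => c N n * thetaTerm q z n) (g := fun n => 1 / D * thetaTerm q z n)
    (hs.mul_left (1 / (D * D))) (fun n => (hc n).mul_const _)
    (Eventually.of_forall fun N n => by
      rw [norm_mul]
      refine mul_le_mul_of_nonneg_right ?_ (norm_nonneg _)
      simp only [c]
      split_ifs
      · exact gaussBinom_bound hp0 hp1 hD hlim _ _
      · rw [norm_zero]; positivity)
  have hu := tendsto_nhds_unique ((ha.mul hb).congr hfin) hdom
  rw [tsum_mul_left] at hu
  field_simp at hu
  linarith

/-! ### Quadratic identities between theta series -/

theorem summable_norm_thetaTerm {q z : ℝ} (h0 : 0 < q) (h1 : q < 1) (hz : |z| = 1) :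
    Summable fun n : ℤ => ‖thetaTerm q z n‖ := by
  have hgeo : Summable fun n : ℕ => q ^ n := summable_geometric_of_lt_one h0.le h1
  have key : ∀ n : ℕ, q ^ ((n : ℤ) ^ 2) ≤ q ^ n := by
    intro n
    have : q ^ ((n : ℤ) ^ 2) = q ^ (n ^ 2) := by exact_mod_cast zpow_natCast q (n ^ 2)
    rw [this]
    exact pow_le_pow_of_le_one h0.le h1.le (by nlinarith [Nat.le_self_pow two_ne_zero n])
  have e : ∀ n : ℤ, ‖thetaTerm q z n‖ = q ^ (n ^ 2) := by
    intro n
    rw [thetaTerm, norm_mul, norm_zpow z, Real.norm_eq_abs z, hz, one_zpow, mul_one,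
      Real.norm_of_nonneg (by positivity)]
  simp_rw [e]
  refine Summable.of_nat_of_neg (Summable.of_nonneg_of_le (fun n => by positivity) key hgeo)
    (Summable.of_nonneg_of_le (fun n => by positivity) (fun n => ?_) hgeo)
  rw [neg_sq]
  exact key n

theorem summable_norm_thetaTerm_self {q : ℝ} (h0 : 0 < q) (h1 : q < 1) :
    Summable fun n : ℤ => ‖thetaTerm q q n‖ := by
  have hgeo : Summable fun n : ℕ => q ^ n := summable_geometric_of_lt_one h0.le h1
  have e : ∀ n : ℤ, ‖thetaTerm q q n‖ = q ^ (n ^ 2 + n) := by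
    intro n
    rw [thetaTerm, ← zpow_add₀ h0.ne', Real.norm_of_nonneg (by positivity)]
  simp_rw [e]
  have key : ∀ n : ℕ, q ^ ((n : ℤ) ^ 2 + n) ≤ q ^ n := by
    intro n
    rw [← zpow_natCast q n]
    exact zpow_le_zpow_right_of_le_one₀ h0 h1.le (by nlinarith)
  refine Summable.of_nat_of_neg_add_one
    (Summable.of_nonneg_of_le (fun n => by positivity) key hgeo)
    (Summable.of_nonneg_of_le (fun n => by positivity) (fun n => ?_) hgeo)
  rw [show (-((n : ℤ) + 1)) ^ 2 + -((n : ℤ) + 1) = (n : ℤ) ^ 2 + n by ring]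
  exact key n

/-- The theta series `∑_{n ∈ ℤ} q^{n²} z^n`. -/
def thetaSum (q z : ℝ) : ℝ := ∑' n : ℤ, thetaTerm q z n

theorem thetaTerm_neg {q z : ℝ} (hz : z = z⁻¹) (n : ℤ) : thetaTerm q z (-n) = thetaTerm q z n := by
  rw [thetaTerm, thetaTerm, neg_sq, ← inv_zpow', ← hz]

theorem thetaSum_eq_nat {q z : ℝ} (h0 : 0 < q) (h1 : q < 1) (hz : z = z⁻¹) (hz1 : |z| = 1) :
    thetaSum q z = 1 + 2 * ∑' n : ℕ, z ^ (n + 1) * q ^ ((n + 1) ^ 2) := by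
  have hs := (summable_norm_thetaTerm h0 h1 hz1).of_norm
  have hn : Summable fun n : ℕ => thetaTerm q z n := hs.comp_injective Nat.cast_injective
  have e : ∀ n : ℕ, thetaTerm q z ((n : ℤ) + 1) = z ^ (n + 1) * q ^ ((n + 1) ^ 2) := by
    intro n
    rw [thetaTerm, mul_comm]
    congr 1
  have hn1 : Summable fun n : ℕ => thetaTerm q z (-((n : ℤ) + 1)) :=
    hs.comp_injective (i := fun n : ℕ => -((n : ℤ) + 1)) fun a b h => by simpa using h
  rw [thetaSum, tsum_of_nat_of_neg_add_one hn hn1, hn.tsum_eq_zero_add]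
  simp_rw [thetaTerm_neg hz, Nat.cast_add, Nat.cast_one, e]
  simp only [thetaTerm, Nat.cast_zero]
  norm_num
  ring

theorem θ3_eq {q : ℝ} (h0 : 0 < q) (h1 : q < 1) : θ3 q = thetaSum q 1 := by
  rw [thetaSum_eq_nat h0 h1 (by norm_num) (by norm_num), θ3]
  simp

theorem θ4_eq {q : ℝ} (h0 : 0 < q) (h1 : q < 1) : θ4 q = thetaSum q (-1) := by
  rw [thetaSum_eq_nat h0 h1 (by norm_num) (by norm_num), θ4]

theorem thetaSum_mul {q z q' z' : ℝ} (h : Summable fun n : ℤ => ‖thetaTerm q z n‖)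
    (h' : Summable fun n : ℤ => ‖thetaTerm q' z' n‖) :
    HasSum (fun x : ℤ × ℤ => thetaTerm q z x.1 * thetaTerm q' z' x.2)
      (thetaSum q z * thetaSum q' z') := by
  rw [thetaSum, thetaSum, tsum_mul_tsum_of_summable_norm h h']
  exact (summable_mul_of_summable_norm h h').hasSum

theorem zpow_sq_add_sub {q : ℝ} (h0 : 0 < q) (a b : ℤ) :
    q ^ ((a + b) ^ 2) * q ^ ((a - b) ^ 2) = (q ^ 2) ^ (a ^ 2) * (q ^ 2) ^ (b ^ 2) := by
  have e : ∀ n : ℤ, (q ^ 2) ^ n = q ^ (2 * n) := fun n => by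
    rw [zpow_mul]; norm_cast
  rw [e, e, ← zpow_add₀ h0.ne', ← zpow_add₀ h0.ne']
  congr 1
  ring

/-- In `θ₃(q)² + θ₄(q)²` only pairs `(m, n)` with `m + n` even survive; these are
`(a + b, a - b)`. -/
theorem thetaSum_sq_add {q : ℝ} (h0 : 0 < q) (h1 : q < 1) :
    thetaSum q 1 ^ 2 + thetaSum q (-1) ^ 2 = 2 * thetaSum (q ^ 2) 1 ^ 2 := by
  have hQ0 : 0 < q ^ 2 := by positivity
  have hQ1 : q ^ 2 < 1 := pow_lt_one₀ h0.le h1 two_ne_zero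
  have s3 := summable_norm_thetaTerm h0 h1 (z := 1) (by norm_num)
  have s4 := summable_norm_thetaTerm h0 h1 (z := -1) (by norm_num)
  have S3 := summable_norm_thetaTerm hQ0 hQ1 (z := 1) (by norm_num)
  have hL := (thetaSum_mul s3 s3).add (thetaSum_mul s4 s4)
  have hR := (thetaSum_mul S3 S3).mul_left 2
  have hinj : Function.Injective (fun x : ℤ × ℤ => (x.1 + x.2, x.1 - x.2)) := by
    rintro ⟨a, b⟩ ⟨c, d⟩ h
    simp only [Prod.mk.injEq] at h ⊢
    omega
  rw [sq, sq, sq, ← hL.tsum_eq, ← hR.tsum_eq, ← hinj.tsum_eq]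
  · refine tsum_congr fun x => ?_
    have e := zpow_sq_add_sub h0 x.1 x.2
    simp only [thetaTerm, one_zpow, mul_one]
    have hpar : (-1 : ℝ) ^ (x.1 + x.2) * (-1 : ℝ) ^ (x.1 - x.2) = 1 := by
      rw [← zpow_add₀ (by norm_num)]
      exact Even.neg_one_zpow ⟨x.1, by ring⟩
    linear_combination 2 * e + q ^ ((x.1 + x.2) ^ 2) * q ^ ((x.1 - x.2) ^ 2) * hpar
  · rintro ⟨m, n⟩ hmn
    have hev : Even (m + n) := by
      by_contra hcon
      apply hmn
      have hodd := (Int.not_even_iff_odd.1 hcon).neg_one_zpow (α := ℝ)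
      rw [zpow_add₀ (by norm_num)] at hodd
      simp only [thetaTerm, one_zpow, mul_one]
      linear_combination q ^ (m ^ 2) * q ^ (n ^ 2) * hodd
    obtain ⟨a, ha⟩ := hev
    exact ⟨(a, m - a), by simp only [Prod.mk.injEq]; omega⟩

/-- In `θ₃(q)² - θ₄(q)²` only pairs `(m, n)` with `m + n` odd survive; these are
`(a + b + 1, a - b)`. -/
theorem thetaSum_sq_sub {q : ℝ} (h0 : 0 < q) (h1 : q < 1) :
    thetaSum q 1 ^ 2 - thetaSum q (-1) ^ 2 = 2 * q * thetaSum (q ^ 2) (q ^ 2) ^ 2 := by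
  have hQ0 : 0 < q ^ 2 := by positivity
  have hQ1 : q ^ 2 < 1 := pow_lt_one₀ h0.le h1 two_ne_zero
  have s3 := summable_norm_thetaTerm h0 h1 (z := 1) (by norm_num)
  have s4 := summable_norm_thetaTerm h0 h1 (z := -1) (by norm_num)
  have S2 := summable_norm_thetaTerm_self hQ0 hQ1
  have hL := (thetaSum_mul s3 s3).sub (thetaSum_mul s4 s4)
  have hR := (thetaSum_mul S2 S2).mul_left (2 * q)
  have hinj : Function.Injective (fun x : ℤ × ℤ => (x.1 + x.2 + 1, x.1 - x.2)) := by
    rintro ⟨a, b⟩ ⟨c, d⟩ h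
    simp only [Prod.mk.injEq] at h ⊢
    omega
  rw [sq, sq, sq, ← hL.tsum_eq, ← hR.tsum_eq, ← hinj.tsum_eq]
  · refine tsum_congr fun x => ?_
    obtain ⟨a, b⟩ := x
    have e : q ^ ((a + b + 1) ^ 2) * q ^ ((a - b) ^ 2)
        = q * (((q ^ 2) ^ (a ^ 2) * (q ^ 2) ^ a) * ((q ^ 2) ^ (b ^ 2) * (q ^ 2) ^ b)) := by
      have e : ∀ n : ℤ, (q ^ 2) ^ n = q ^ (2 * n) := fun n => by
        rw [zpow_mul]; norm_cast
      simp only [e]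
      rw [← zpow_add₀ h0.ne', ← zpow_add₀ h0.ne', ← zpow_add₀ h0.ne', ← zpow_add₀ h0.ne',
        ← zpow_one_add₀ h0.ne']
      congr 1
      ring
    simp only [thetaTerm, one_zpow, mul_one]
    have hpar : (-1 : ℝ) ^ (a + b + 1) * (-1 : ℝ) ^ (a - b) = -1 := by
      rw [← zpow_add₀ (by norm_num)]
      exact Odd.neg_one_zpow ⟨a, by ring⟩
    linear_combination 2 * e - q ^ ((a + b + 1) ^ 2) * q ^ ((a - b) ^ 2) * hpar
  · rintro ⟨m, n⟩ hmn
    have hodd : Odd (m + n) := by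
      by_contra hcon
      apply hmn
      have hev := (Int.not_odd_iff_even.1 hcon).neg_one_zpow (α := ℝ)
      rw [zpow_add₀ (by norm_num)] at hev
      simp only [thetaTerm, one_zpow, mul_one]
      linear_combination - q ^ (m ^ 2) * q ^ (n ^ 2) * hev
    obtain ⟨a, ha⟩ := hodd
    exact ⟨(a, m - a - 1), by simp only [Prod.mk.injEq]; omega⟩

/-- The swap `(m, n) ↦ (n, m)` symmetrizes `θ₃(q) θ₄(q)`, so that again only pairs with
`m + n` even survive. -/
theorem thetaSum_mul_neg {q : ℝ} (h0 : 0 < q) (h1 : q < 1) :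
    thetaSum q 1 * thetaSum q (-1) = thetaSum (q ^ 2) (-1) ^ 2 := by
  have hQ0 : 0 < q ^ 2 := by positivity
  have hQ1 : q ^ 2 < 1 := pow_lt_one₀ h0.le h1 two_ne_zero
  have s3 := summable_norm_thetaTerm h0 h1 (z := 1) (by norm_num)
  have s4 := summable_norm_thetaTerm h0 h1 (z := -1) (by norm_num)
  have S4 := summable_norm_thetaTerm hQ0 hQ1 (z := -1) (by norm_num)
  have hL := (thetaSum_mul s3 s4).add (thetaSum_mul s4 s3)
  have hR := (thetaSum_mul S4 S4).mul_left 2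
  have hinj : Function.Injective (fun x : ℤ × ℤ => (x.1 + x.2, x.1 - x.2)) := by
    rintro ⟨a, b⟩ ⟨c, d⟩ h
    simp only [Prod.mk.injEq] at h ⊢
    omega
  suffices h : thetaSum q 1 * thetaSum q (-1) + thetaSum q (-1) * thetaSum q 1
      = 2 * (thetaSum (q ^ 2) (-1) * thetaSum (q ^ 2) (-1)) by linarith
  rw [← hL.tsum_eq, ← hR.tsum_eq, ← hinj.tsum_eq]
  · refine tsum_congr fun x => ?_
    obtain ⟨a, b⟩ := x
    have e := zpow_sq_add_sub h0 a b
    simp only [thetaTerm, one_zpow, mul_one]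
    have hp1 : (-1 : ℝ) ^ (a + b) = (-1 : ℝ) ^ a * (-1 : ℝ) ^ b := zpow_add₀ (by norm_num) _ _
    have hp2 : (-1 : ℝ) ^ (a - b) = (-1 : ℝ) ^ a * (-1 : ℝ) ^ b := by
      rw [sub_eq_add_neg, zpow_add₀ (by norm_num), ← inv_zpow']
      norm_num
    rw [hp1, hp2]
    linear_combination 2 * (-1 : ℝ) ^ a * (-1 : ℝ) ^ b * e
  · rintro ⟨m, n⟩ hmn
    have hev : Even (m + n) := by
      by_contra hcon
      apply hmn
      have hodd : Odd (m - n) := by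
        have := Int.not_even_iff_odd.1 hcon
        obtain ⟨k, hk⟩ := this
        exact ⟨k - n, by omega⟩
      have hneg : (-1 : ℝ) ^ m = - (-1 : ℝ) ^ n := by
        rw [show m = (m - n) + n by ring, zpow_add₀ (by norm_num), hodd.neg_one_zpow]
        ring
      simp only [thetaTerm, one_zpow, mul_one]
      rw [hneg]
      ring
    obtain ⟨a, ha⟩ := hev
    exact ⟨(a, m - a), by simp only [Prod.mk.injEq]; omega⟩

/-! ### The Fibonacci products -/

theorem β_sq : β ^ 2 = 1 - β := by
  have h := Real.sq_sqrt (show (0 : ℝ) ≤ 5 by norm_num)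
  unfold β
  linear_combination h / 4

theorem β_pos : 0 < β := by
  have : (1 : ℝ) < Real.sqrt 5 := by
    rw [Real.lt_sqrt (by norm_num)]; norm_num
  unfold β
  linarith

theorem β_lt_one : β < 1 := by
  nlinarith [β_sq, β_pos]

/-- Binet's formula, with `√5` written as `2 β + 1`. -/
theorem F_binet : ∀ n : ℕ,
    (F n : ℝ) * ((2 * β + 1) * β ^ (n + 1)) = 1 - (-1) ^ (n + 1) * β ^ (2 * n + 2)
  | 0 => by simp [F]; linear_combination 1 * β_sq
  | 1 => by simp [F]; linear_combination (β ^ 2 + β + 1) * β_sq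
  | n + 2 => by
    have h1 := F_binet (n + 1)
    have h2 := F_binet n
    have e : (F (n + 2) : ℝ) = F (n + 1) + F n := by
      rw [show F (n + 2) = F (n + 1) + F n from rfl]; push_cast; rfl
    rw [e]
    have hb := β_sq
    linear_combination β * h1 + β ^ 2 * h2 +
      (1 - (-1) ^ n * β ^ (2 * n + 2) * β ^ 2) * hb

theorem F_pos (n : ℕ) : (0 : ℝ) < F n := by
  have : ∀ n, 0 < F n ∧ 0 < F (n + 1) := by
    intro n
    induction n with
    | zero => simp [F]
    | succ n ih => exact ⟨ih.2, by rw [show F (n + 1 + 1) = F (n + 1) + F n from rfl]; omega⟩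
  exact_mod_cast (this n).1

theorem one_add_inv_of_mul_eq {f x y : ℝ} (hf : 0 < f) (hx : 0 < x) (h : f * x = y) :
    1 + 1 / f = (y + x) / y ∧ 1 - 1 / f = (y - x) / y := by
  subst h
  constructor <;> field_simp

/-- The four factors `1 ± 1 / F n` for `n = 4K+3, …, 4K+6`, factored in terms of `Q = β²` and
`v = Q^{2K+1}`. These are the classical factorizations of `f_m ± 1` as a Fibonacci number times a
Lucas number. -/
theorem fib_factors (K : ℕ) {v Q : ℝ} (hQ : Q = β ^ 2) (hv : v = Q ^ (2 * K + 1)) :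
    ((1 + 1 / (F (4 * K + 3) : ℝ) = (1 + v) * (1 - v * Q ^ 2) / (1 - v ^ 2 * Q ^ 2)) ∧
     (1 - 1 / (F (4 * K + 3) : ℝ) = (1 - v) * (1 + v * Q ^ 2) / (1 - v ^ 2 * Q ^ 2))) ∧
    ((1 + 1 / (F (4 * K + 4) : ℝ) = (1 + v * Q) * (1 + v * Q ^ 2) / (1 + v ^ 2 * Q ^ 3)) ∧
     (1 - 1 / (F (4 * K + 4) : ℝ) = (1 - v * Q) * (1 - v * Q ^ 2) / (1 + v ^ 2 * Q ^ 3))) ∧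
    ((1 + 1 / (F (4 * K + 5) : ℝ) = (1 + v * Q) * (1 - v * Q ^ 3) / (1 - v ^ 2 * Q ^ 4)) ∧
     (1 - 1 / (F (4 * K + 5) : ℝ) = (1 - v * Q) * (1 + v * Q ^ 3) / (1 - v ^ 2 * Q ^ 4))) ∧
    ((1 + 1 / (F (4 * K + 6) : ℝ) = (1 + v * Q ^ 2) * (1 + v * Q ^ 3) / (1 + v ^ 2 * Q ^ 5)) ∧
     (1 - 1 / (F (4 * K + 6) : ℝ) = (1 - v * Q ^ 2) * (1 - v * Q ^ 3) / (1 + v ^ 2 * Q ^ 5))) := by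
  have hβ := β_pos
  have hv' : v = β ^ (4 * K + 2) := by rw [hv, hQ, ← pow_mul]; congr 1; ring
  have hvp : 0 < v := by rw [hv']; positivity
  -- `√5 β = 1 + β²` and `√5 β² = 1 - β⁴`
  have r1 : (2 * β + 1) * β = 1 + β ^ 2 := by linear_combination β_sq
  have r2 : (2 * β + 1) * β ^ 2 = 1 - β ^ 4 := by
    linear_combination (β ^ 2 + β + 1) * β_sq
  have sgn : ((-1 : ℝ) ^ (4 * K) = 1) := Even.neg_one_pow ⟨2 * K, by ring⟩
  have b0 : (F (4 * K + 3) : ℝ) * (v * ((2 * β + 1) * β ^ 2)) = 1 - v ^ 2 * Q ^ 2 := by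
    have h := F_binet (4 * K + 3)
    rw [hv', hQ]
    linear_combination h - β ^ (8 * K + 8) * sgn
  have b1 : (F (4 * K + 4) : ℝ) * (v * ((2 * β + 1) * β ^ 3)) = 1 + v ^ 2 * Q ^ 3 := by
    have h := F_binet (4 * K + 4)
    rw [hv', hQ]
    linear_combination h + β ^ (8 * K + 10) * sgn
  have b2 : (F (4 * K + 5) : ℝ) * (v * ((2 * β + 1) * β ^ 4)) = 1 - v ^ 2 * Q ^ 4 := by
    have h := F_binet (4 * K + 5)
    rw [hv', hQ]
    linear_combination h - β ^ (8 * K + 12) * sgn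
  have b3 : (F (4 * K + 6) : ℝ) * (v * ((2 * β + 1) * β ^ 5)) = 1 + v ^ 2 * Q ^ 5 := by
    have h := F_binet (4 * K + 6)
    rw [hv', hQ]
    linear_combination h + β ^ (8 * K + 14) * sgn
  have c0 := one_add_inv_of_mul_eq (F_pos _) (by positivity) b0
  have c1 := one_add_inv_of_mul_eq (F_pos _) (by positivity) b1
  have c2 := one_add_inv_of_mul_eq (F_pos _) (by positivity) b2
  have c3 := one_add_inv_of_mul_eq (F_pos _) (by positivity) b3
  rw [c0.1, c0.2, c1.1, c1.2, c2.1, c2.2, c3.1, c3.2]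
  subst hQ
  refine ⟨⟨?_, ?_⟩, ⟨?_, ?_⟩, ⟨?_, ?_⟩, ⟨?_, ?_⟩⟩ <;> congr 1
  · linear_combination v * r2
  · linear_combination -v * r2
  · linear_combination v * β ^ 2 * r1
  · linear_combination -v * β ^ 2 * r1
  · linear_combination v * β ^ 2 * r2
  · linear_combination -v * β ^ 2 * r2
  · linear_combination v * β ^ 4 * r1
  · linear_combination -v * β ^ 4 * r1

/-- The partial product `∏_{k<n} (1 + ε Q^{2k+1})`. -/
def oddProd (ε Q : ℝ) (n : ℕ) : ℝ := ∏ k ∈ Finset.range n, (1 + ε * Q ^ (2 * k + 1))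

/-- The partial product `∏_{k<n} (1 + ε Q^{2k+2})`. -/
def evenProd (ε Q : ℝ) (n : ℕ) : ℝ := ∏ k ∈ Finset.range n, (1 + ε * Q ^ (2 * k + 2))

theorem oddProd_succ (ε Q : ℝ) (n : ℕ) :
    oddProd ε Q (n + 1) = oddProd ε Q n * (1 + ε * Q ^ (2 * n + 1)) := Finset.prod_range_succ _ _

theorem evenProd_succ (ε Q : ℝ) (n : ℕ) :
    evenProd ε Q (n + 1) = evenProd ε Q n * (1 + ε * Q ^ (2 * n + 2)) := Finset.prod_range_succ _ _

theorem oddProd_one_pos {Q : ℝ} (h : 0 < Q) (n : ℕ) : 0 < oddProd 1 Q n :=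
  Finset.prod_pos fun _ _ => by positivity

theorem oddProd_block (Q : ℝ) (K : ℕ) {v : ℝ} (hv : v = Q ^ (2 * K + 1)) :
    oddProd 1 Q (2 * (K + 1) + 2) =
      oddProd 1 Q (2 * K + 2) * (1 + v ^ 2 * Q ^ 3) * (1 + v ^ 2 * Q ^ 5) := by
  rw [show 2 * (K + 1) + 2 = (2 * K + 2) + 1 + 1 by ring, oddProd_succ, oddProd_succ, hv]
  ring

theorem Q_facts {Q : ℝ} (hQ : Q = β ^ 2) : 0 < Q ∧ Q < 1 := by
  subst hQ
  exact ⟨pow_pos β_pos 2, pow_lt_one₀ β_pos.le β_lt_one two_ne_zero⟩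

theorem xi1_partial {Q : ℝ} (hQ : Q = β ^ 2) (K : ℕ) :
    ∏ n ∈ Finset.Icc 1 (4 * K + 2), (1 + 1 / (F n : ℝ)) =
      3 * (1 + Q ^ 3) / (1 - Q ^ 4) * (1 - Q ^ (4 * K + 4)) *
        (oddProd 1 Q K * oddProd 1 Q (K + 1) * evenProd 1 Q K ^ 2 / oddProd 1 Q (2 * K + 2)) := by
  obtain ⟨h0, h1⟩ := Q_facts hQ
  have hn : ∀ n : ℕ, n ≠ 0 → 1 - Q ^ n ≠ 0 := fun n hn =>
    (sub_pos.2 (pow_lt_one₀ h0.le h1 hn)).ne'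
  induction K with
  | zero =>
    have h4 := hn 4 (by norm_num)
    norm_num [Finset.prod_Icc_succ_top, F, oddProd, evenProd, Finset.prod_range_succ]
    field_simp
  | succ K ih =>
    obtain ⟨v, hv⟩ : ∃ v, v = Q ^ (2 * K + 1) := ⟨_, rfl⟩
    obtain ⟨f0, f1, f2, f3⟩ := fib_factors K hQ hv
    have hvp : 0 < v := by rw [hv]; positivity
    rw [show 4 * (K + 1) + 2 = 4 * K + 2 + 1 + 1 + 1 + 1 by ring,
      Finset.prod_Icc_succ_top (by omega), Finset.prod_Icc_succ_top (by omega),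
      Finset.prod_Icc_succ_top (by omega), Finset.prod_Icc_succ_top (by omega), ih,
      f0.1, f1.1, f2.1, f3.1, oddProd_block Q K hv, oddProd_succ 1 Q (K + 1),
      oddProd_succ 1 Q K, evenProd_succ,
      show Q ^ (4 * K + 4) = v ^ 2 * Q ^ 2 by rw [hv]; ring,
      show Q ^ (4 * (K + 1) + 4) = v ^ 2 * Q ^ 6 by rw [hv]; ring,
      show Q ^ (2 * (K + 1) + 1) = v * Q ^ 2 by rw [hv]; ring,
      show Q ^ (2 * K + 2) = v * Q by rw [hv]; ring, ← hv]
    have d0 : 1 - Q ^ 2 * v ^ 2 ≠ 0 := by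
      have := hn (4 * K + 4) (by omega)
      rwa [show Q ^ (4 * K + 4) = Q ^ 2 * v ^ 2 by rw [hv]; ring] at this
    have d2 : 1 - Q ^ 4 * v ^ 2 ≠ 0 := by
      have := hn (4 * K + 6) (by omega)
      rwa [show Q ^ (4 * K + 6) = Q ^ 4 * v ^ 2 by rw [hv]; ring] at this
    have h4 := hn 4 (by norm_num)
    have ha := (oddProd_one_pos h0 (2 * K + 2)).ne'
    have d1 : 1 + v ^ 2 * Q ^ 3 ≠ 0 := by positivity
    have d3 : 1 + v ^ 2 * Q ^ 5 ≠ 0 := by positivity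
    field_simp
    ring

theorem xi2_partial {Q : ℝ} (hQ : Q = β ^ 2) (K : ℕ) :
    ∏ n ∈ Finset.Icc 3 (4 * K + 2), (1 - 1 / (F n : ℝ)) =
      (1 + Q) * (1 + Q ^ 3) / ((1 - Q) * (1 - Q ^ 4)) * (1 - Q ^ (4 * K + 4)) *
        (oddProd (-1) Q K * oddProd (-1) Q (K + 1) * evenProd (-1) Q K ^ 2 /
          oddProd 1 Q (2 * K + 2)) := by
  obtain ⟨h0, h1⟩ := Q_facts hQ
  have hn : ∀ n : ℕ, n ≠ 0 → 1 - Q ^ n ≠ 0 := fun n hn =>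
    (sub_pos.2 (pow_lt_one₀ h0.le h1 hn)).ne'
  have hQ1 : 1 - Q ≠ 0 := by simpa using hn 1 one_ne_zero
  have h4 := hn 4 (by norm_num)
  induction K with
  | zero =>
    norm_num [oddProd, evenProd, Finset.prod_range_succ]
    field_simp
    ring
  | succ K ih =>
    obtain ⟨v, hv⟩ : ∃ v, v = Q ^ (2 * K + 1) := ⟨_, rfl⟩
    obtain ⟨f0, f1, f2, f3⟩ := fib_factors K hQ hv
    have hvp : 0 < v := by rw [hv]; positivity
    rw [show 4 * (K + 1) + 2 = 4 * K + 2 + 1 + 1 + 1 + 1 by ring,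
      Finset.prod_Icc_succ_top (by omega), Finset.prod_Icc_succ_top (by omega),
      Finset.prod_Icc_succ_top (by omega), Finset.prod_Icc_succ_top (by omega), ih,
      f0.2, f1.2, f2.2, f3.2, oddProd_block Q K hv, oddProd_succ (-1) Q (K + 1),
      oddProd_succ (-1) Q K, evenProd_succ,
      show Q ^ (4 * K + 4) = v ^ 2 * Q ^ 2 by rw [hv]; ring,
      show Q ^ (4 * (K + 1) + 4) = v ^ 2 * Q ^ 6 by rw [hv]; ring,
      show Q ^ (2 * (K + 1) + 1) = v * Q ^ 2 by rw [hv]; ring,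
      show Q ^ (2 * K + 2) = v * Q by rw [hv]; ring, ← hv]
    have d0 : 1 - Q ^ 2 * v ^ 2 ≠ 0 := by
      have := hn (4 * K + 4) (by omega)
      rwa [show Q ^ (4 * K + 4) = Q ^ 2 * v ^ 2 by rw [hv]; ring] at this
    have d2 : 1 - Q ^ 4 * v ^ 2 ≠ 0 := by
      have := hn (4 * K + 6) (by omega)
      rwa [show Q ^ (4 * K + 6) = Q ^ 4 * v ^ 2 by rw [hv]; ring] at this
    have ha := (oddProd_one_pos h0 (2 * K + 2)).ne'
    have d1 : 1 + v ^ 2 * Q ^ 3 ≠ 0 := by positivity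
    have d3 : 1 + v ^ 2 * Q ^ 5 ≠ 0 := by positivity
    field_simp
    ring

/-! ### Limits of the products -/

theorem exists_oddProd_limit {ε Q : ℝ} (h0 : 0 < Q) (h1 : Q < 1) (hε : |ε| = 1) :
    ∃ L : ℝ, 0 < L ∧ Tendsto (oddProd ε Q) atTop (𝓝 L) := by
  refine exists_prod_limit (fun k => ε * Q ^ (2 * k + 1)) ?_ fun k => ?_
  · refine Summable.of_nonneg_of_le (fun k => norm_nonneg _) (fun k => ?_)
      (summable_geometric_of_lt_one h0.le h1)
    rw [norm_mul, Real.norm_eq_abs, hε, one_mul, Real.norm_of_nonneg (by positivity)]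
    exact pow_le_pow_of_le_one h0.le h1.le (by omega)
  · have hlt := pow_lt_one₀ h0.le h1 (show 2 * k + 1 ≠ 0 by omega)
    have hp : 0 < Q ^ (2 * k + 1) := by positivity
    nlinarith [neg_abs_le ε]

theorem exists_evenProd_limit {ε Q : ℝ} (h0 : 0 < Q) (h1 : Q < 1) (hε : |ε| = 1) :
    ∃ L : ℝ, 0 < L ∧ Tendsto (evenProd ε Q) atTop (𝓝 L) := by
  refine exists_prod_limit (fun k => ε * Q ^ (2 * k + 2)) ?_ fun k => ?_
  · refine Summable.of_nonneg_of_le (fun k => norm_nonneg _) (fun k => ?_)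
      (summable_geometric_of_lt_one h0.le h1)
    rw [norm_mul, Real.norm_eq_abs, hε, one_mul, Real.norm_of_nonneg (by positivity)]
    exact pow_le_pow_of_le_one h0.le h1.le (by omega)
  · have hlt := pow_lt_one₀ h0.le h1 (show 2 * k + 2 ≠ 0 by omega)
    have hp : 0 < Q ^ (2 * k + 2) := by positivity
    nlinarith [neg_abs_le ε]

theorem euler_partial (Q : ℝ) (n : ℕ) :
    oddProd 1 Q n * evenProd 1 Q n * (oddProd (-1) Q n * evenProd (-1) Q n) =
      evenProd (-1) Q (2 * n) := by
  induction n with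
  | zero => simp [oddProd, evenProd]
  | succ n ih =>
    rw [show 2 * (n + 1) = 2 * n + 1 + 1 by ring, evenProd_succ (-1) Q (2 * n + 1),
      evenProd_succ (-1) Q (2 * n), ← ih]
    simp only [oddProd_succ, evenProd_succ]
    ring

theorem poch_sq_eq (Q : ℝ) : poch (Q ^ 2) = evenProd (-1) Q := by
  funext n
  refine Finset.prod_congr rfl fun i _ => ?_
  ring

theorem tendsto_comp_of_le {u : ℕ → ℝ} {L : ℝ} (h : Tendsto u atTop (𝓝 L)) {g : ℕ → ℕ}
    (hg : ∀ n, n ≤ g n) : Tendsto (fun n => u (g n)) atTop (𝓝 L) :=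
  h.comp (tendsto_atTop_mono hg tendsto_id)

/-- The algebra behind the theorem: with `u = A C²` one has `A B² = 1 / u` and
`C²⁴ (16 Q + u⁸) = u¹⁶`, so `C`, then `A`, `B` and finally `D` lie in any relatively
algebraically closed field containing `Q`, `A B²` and `C² D² / A`. -/
theorem prods_mem {K : Type*} [Field K] [Algebra K ℝ] {A B C D Q : ℝ}
    (hA : 0 < A) (hC : 0 < C) (hQ : 0 < Q) (euler : A * B * C = 1)
    (quartic : A ^ 8 = 16 * Q * B ^ 8 + C ^ 8)
    (mQ : Q ∈ algebraicClosure K ℝ) (m1 : A * B ^ 2 ∈ algebraicClosure K ℝ)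
    (m2 : C ^ 2 * D ^ 2 / A ∈ algebraicClosure K ℝ) :
    A ∈ algebraicClosure K ℝ ∧ B ∈ algebraicClosure K ℝ ∧ D ∈ algebraicClosure K ℝ := by
  have root : ∀ {x : ℝ} {n : ℕ}, 0 < n → x ^ n ∈ algebraicClosure K ℝ →
      x ∈ algebraicClosure K ℝ := fun hn h =>
    mem_algebraicClosure_iff.2 (IsAlgebraic.of_pow hn (mem_algebraicClosure_iff.1 h))
  have hu : A * C ^ 2 = (A * B ^ 2)⁻¹ := by
    refine eq_inv_of_mul_eq_one_left ?_
    linear_combination (A * B * C + 1) * euler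
  have mu : A * C ^ 2 ∈ algebraicClosure K ℝ := by rw [hu]; exact inv_mem m1
  have m16 : (16 : ℝ) ∈ algebraicClosure K ℝ := ofNat_mem _ 16
  have mC : C ∈ algebraicClosure K ℝ := by
    refine root (n := 24) (by norm_num) ?_
    have e : C ^ 24 = (A * C ^ 2) ^ 16 / (16 * Q + (A * C ^ 2) ^ 8) := by
      rw [eq_div_iff (by positivity)]
      have h8 : (A * B * C) ^ 8 = 1 := by rw [euler, one_pow]
      linear_combination (-(16 * Q * C ^ 24)) * h8 - A ^ 8 * C ^ 32 * quartic
    rw [e]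
    exact div_mem (pow_mem mu 16) (add_mem (mul_mem m16 mQ) (pow_mem mu 8))
  have mA : A ∈ algebraicClosure K ℝ := by
    have e : A = A * C ^ 2 / C ^ 2 := by field_simp
    rw [e]
    exact div_mem mu (pow_mem mC 2)
  have mB : B ∈ algebraicClosure K ℝ := by
    have e : B = (A * C)⁻¹ := eq_inv_of_mul_eq_one_left (by linear_combination euler)
    rw [e]
    exact inv_mem (mul_mem mA mC)
  refine ⟨mA, mB, root (n := 2) (by norm_num) ?_⟩
  have e : D ^ 2 = C ^ 2 * D ^ 2 / A * (A / C ^ 2) := by field_simp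
  rw [e]
  exact mul_mem m2 (div_mem mA (pow_mem mC 2))

theorem theta_values_algebraic_over_xi (ξ1 ξ2 : ℝ)
    (h1 : Filter.Tendsto (fun N : ℕ => ∏ n ∈ Finset.Icc 1 N, (1 + 1 / (F n : ℝ)))
      Filter.atTop (nhds ξ1))
    (h2 : Filter.Tendsto (fun N : ℕ => ∏ n ∈ Finset.Icc 3 N, (1 - 1 / (F n : ℝ)))
      Filter.atTop (nhds ξ2)) :
    IsAlgebraic (↥(IntermediateField.adjoin ℚ {ξ1, ξ2})) (θ3 β) ∧
    IsAlgebraic (↥(IntermediateField.adjoin ℚ {ξ1, ξ2})) (θ4 β) := by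
  obtain ⟨Q, hQ⟩ : ∃ Q, Q = β ^ 2 := ⟨_, rfl⟩
  obtain ⟨hQ0, hQ1⟩ := Q_facts hQ
  have hβ0 := β_pos
  have hβ1 := β_lt_one
  obtain ⟨A, hA, tA⟩ := exists_oddProd_limit (ε := 1) hQ0 hQ1 (by norm_num)
  obtain ⟨B, hB, tB⟩ := exists_evenProd_limit (ε := 1) hQ0 hQ1 (by norm_num)
  obtain ⟨C, hC, tC⟩ := exists_oddProd_limit (ε := -1) hQ0 hQ1 (by norm_num)
  obtain ⟨D, hD, tD⟩ := exists_evenProd_limit (ε := -1) hQ0 hQ1 (by norm_num)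
  have hpoch : Tendsto (poch (Q ^ 2)) atTop (𝓝 D) := by rw [poch_sq_eq]; exact tD
  have hS : thetaSum Q 1 = D * A * A :=
    triple_product hQ0 hQ1 one_ne_zero hD hpoch tA (by rw [inv_one]; exact tA)
      (summable_norm_thetaTerm hQ0 hQ1 (by norm_num))
  have hT : thetaSum Q (-1) = D * C * C :=
    triple_product hQ0 hQ1 (by norm_num) hD hpoch tC
      (by rw [show (-1 : ℝ)⁻¹ = -1 by norm_num]; exact tC)
      (summable_norm_thetaTerm hQ0 hQ1 (by norm_num))
  have hE : thetaSum Q Q = D * B * (2 * B) := by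
    refine triple_product hQ0 hQ1 hQ0.ne' hD hpoch ?_ ?_ (summable_norm_thetaTerm_self hQ0 hQ1)
    · refine tB.congr fun N => Finset.prod_congr rfl fun k _ => ?_
      ring
    · rw [← tendsto_add_atTop_iff_nat 1]
      refine (tB.const_mul 2).congr fun N => ?_
      rw [Finset.prod_range_succ', mul_comm, evenProd]
      congr 1
      · refine Finset.prod_congr rfl fun k _ => ?_
        field_simp
        ring
      · rw [mul_zero, zero_add, pow_one, inv_mul_cancel₀ hQ0.ne']
        norm_num
  have euler : A * B * C = 1 := by
    have h := ((tA.mul tB).mul (tC.mul tD)).congr (euler_partial Q)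
    have h' := tendsto_nhds_unique h
      (tendsto_comp_of_le tD (g := fun n => 2 * n) (by intro n; omega))
    exact mul_right_cancel₀ hD.ne' (by linear_combination h')
  have i1 := thetaSum_sq_add hβ0 hβ1
  have i2 := thetaSum_sq_sub hβ0 hβ1
  have i3 := thetaSum_mul_neg hβ0 hβ1
  rw [← hQ, hS] at i1
  rw [← hQ, hE] at i2
  rw [← hQ, hT] at i3
  rw [← θ3_eq hβ0 hβ1, ← θ4_eq hβ0 hβ1] at i1 i2 i3
  -- Jacobi's quartic identity, from `(x² + y²)² - (x² - y²)² = 4 (x y)²`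
  have quartic : A ^ 8 = 16 * Q * B ^ 8 + C ^ 8 := by
    have hD4 : 4 * D ^ 4 ≠ 0 := by positivity
    refine mul_left_cancel₀ hD4 ?_
    have j1 := congrArg (fun x => x ^ 2) i1
    have j2 := congrArg (fun x => x ^ 2) i2
    have j3 := congrArg (fun x => x ^ 2) i3
    rw [hQ]
    linear_combination j2 - j1 + 4 * j3
  have tsub : ∀ K : ℕ, K ≤ 4 * K + 2 := fun K => by omega
  have t1 : Tendsto (fun K : ℕ => 1 - Q ^ (4 * K + 4)) atTop (𝓝 (1 - 0)) :=
    (tendsto_comp_of_le (tendsto_pow_atTop_nhds_zero_of_lt_one hQ0.le hQ1)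
      (g := fun K => 4 * K + 4) (by intro n; omega)).const_sub 1
  have tA1 := tendsto_comp_of_le tA (g := fun K => K + 1) (by intro n; omega)
  have tA2 := tendsto_comp_of_le tA (g := fun K => 2 * K + 2) (by intro n; omega)
  have tC1 := tendsto_comp_of_le tC (g := fun K => K + 1) (by intro n; omega)
  have hξ1 : ξ1 = 3 * (1 + Q ^ 3) / (1 - Q ^ 4) * (1 - 0) * (A * A * B ^ 2 / A) :=
    tendsto_nhds_unique ((tendsto_comp_of_le h1 tsub).congr (xi1_partial hQ))
      ((t1.const_mul _).mul (((tA.mul tA1).mul (tB.pow 2)).div tA2 hA.ne'))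
  have hξ2 : ξ2 = (1 + Q) * (1 + Q ^ 3) / ((1 - Q) * (1 - Q ^ 4)) * (1 - 0) *
      (C * C * D ^ 2 / A) :=
    tendsto_nhds_unique ((tendsto_comp_of_le h2 tsub).congr (xi2_partial hQ))
      ((t1.const_mul _).mul (((tC.mul tC1).mul (tD.pow 2)).div tA2 hA.ne'))
  set K := IntermediateField.adjoin ℚ {ξ1, ξ2}
  have mξ1 : ξ1 ∈ algebraicClosure K ℝ :=
    (algebraicClosure K ℝ).algebraMap_mem
      ⟨ξ1, IntermediateField.subset_adjoin ℚ _ (Set.mem_insert _ _)⟩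
  have mξ2 : ξ2 ∈ algebraicClosure K ℝ :=
    (algebraicClosure K ℝ).algebraMap_mem
      ⟨ξ2, IntermediateField.subset_adjoin ℚ _ (Set.mem_insert_of_mem _ rfl)⟩
  have m2 : (2 : ℝ) ∈ algebraicClosure K ℝ := ofNat_mem _ 2
  have m3 : (3 : ℝ) ∈ algebraicClosure K ℝ := ofNat_mem _ 3
  have mone : (1 : ℝ) ∈ algebraicClosure K ℝ := one_mem _
  have mβ : β ∈ algebraicClosure K ℝ := by
    have m5 : Real.sqrt 5 ∈ algebraicClosure K ℝ := by
      refine mem_algebraicClosure_iff.2 (IsAlgebraic.of_pow two_pos (mem_algebraicClosure_iff.1 ?_))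
      rw [Real.sq_sqrt (by norm_num)]
      exact ofNat_mem _ 5
    exact div_mem (sub_mem m5 mone) m2
  have mQ : Q ∈ algebraicClosure K ℝ := by rw [hQ]; exact pow_mem mβ 2
  have dQ4 : 1 - Q ^ 4 ≠ 0 := (sub_pos.2 (pow_lt_one₀ hQ0.le hQ1 (by norm_num))).ne'
  have dQ1 : 1 - Q ≠ 0 := (sub_pos.2 hQ1).ne'
  have mAB : A * B ^ 2 ∈ algebraicClosure K ℝ := by
    have e : A * B ^ 2 = ξ1 / (3 * (1 + Q ^ 3) / (1 - Q ^ 4)) := by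
      rw [hξ1]; field_simp; ring
    rw [e]
    exact div_mem mξ1 (div_mem (mul_mem m3 (add_mem mone (pow_mem mQ 3)))
      (sub_mem mone (pow_mem mQ 4)))
  have mCD : C ^ 2 * D ^ 2 / A ∈ algebraicClosure K ℝ := by
    have e : C ^ 2 * D ^ 2 / A = ξ2 / ((1 + Q) * (1 + Q ^ 3) / ((1 - Q) * (1 - Q ^ 4))) := by
      rw [hξ2]; field_simp; ring
    rw [e]
    exact div_mem mξ2 (div_mem (mul_mem (add_mem mone mQ) (add_mem mone (pow_mem mQ 3)))
      (mul_mem (sub_mem mone mQ) (sub_mem mone (pow_mem mQ 4))))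
  obtain ⟨mA, mB, mD⟩ := prods_mem hA hC hQ0 euler quartic mQ mAB mCD
  have mS2 : (D * A * A) ^ 2 ∈ algebraicClosure K ℝ := pow_mem (mul_mem (mul_mem mD mA) mA) 2
  have mE2 : β * (D * B * (2 * B)) ^ 2 ∈ algebraicClosure K ℝ :=
    mul_mem mβ (pow_mem (mul_mem (mul_mem mD mB) (mul_mem m2 mB)) 2)
  constructor
  · refine IsAlgebraic.of_pow two_pos (mem_algebraicClosure_iff.1 ?_)
    rw [show θ3 β ^ 2 = (D * A * A) ^ 2 + β * (D * B * (2 * B)) ^ 2 by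
      linear_combination (i1 + i2) / 2]
    exact add_mem mS2 mE2
  · refine IsAlgebraic.of_pow two_pos (mem_algebraicClosure_iff.1 ?_)
    rw [show θ4 β ^ 2 = (D * A * A) ^ 2 - β * (D * B * (2 * B)) ^ 2 by
      linear_combination (i1 - i2) / 2]
    exact sub_mem mS2 mE2
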